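/- The dressed Cauchy matrix obeys the linear shift relations M̃ = M − r·s̃ᵀ, M̂ = M − r·ŝᵀ, and M̄ = M − r·s̄ᵀ, where s̃, ŝ, s̄ denote the vector s evaluated at (n+1,m,h), (n,m+1,h), (n,m,h+1) respectively. -/

import Mathlib

open scoped BigOperators

noncomputable section

/-- A period lattice in `ℂ` spanned by two `ℝ`-independent periods. -/
structure EllLattice where
  ω₁ : ℂ
  ω₂ : ℂ
  indep : ∀ a b : ℝ, a • ω₁ + b • ω₂ = 0 → a = 0 ∧ b = 0

namespace EllLattice

/-- Membership in the lattice `Λ = ℤω₁ + ℤω₂`. -/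
def mem (L : EllLattice) (z : ℂ) : Prop := ∃ m n : ℤ, z = m • L.ω₁ + n • L.ω₂

/-- The lattice point with integer coordinates `p = (m, n)`. -/
def per (L : EllLattice) (p : ℤ × ℤ) : ℂ := p.1 • L.ω₁ + p.2 • L.ω₂

/-- The Weierstrass sigma function associated to the lattice, defined by its
Hadamard product over the nonzero lattice points. -/
def sigma (L : EllLattice) (z : ℂ) : ℂ :=
  z * ∏' p : {p : ℤ × ℤ // p ≠ 0},
      ((1 - z / L.per p.1) *
        Complex.exp (z / L.per p.1 + z ^ 2 / (2 * (L.per p.1) ^ 2)))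

/-- The Weierstrass zeta function `ζ = σ′/σ`. -/
def zeta (L : EllLattice) (z : ℂ) : ℂ := deriv L.sigma z / L.sigma z

/-- The Weierstrass `℘`-function `℘ = −ζ′`. -/
def wp (L : EllLattice) (z : ℂ) : ℂ := - deriv L.zeta z

/-- `Φ_ξ(κ) = σ(ξ+κ)/(σ(ξ)σ(κ))`. -/
def Phi (L : EllLattice) (ξ κ : ℂ) : ℂ := L.sigma (ξ + κ) / (L.sigma ξ * L.sigma κ)

/-- The Lamé function `Ψ_ξ(κ) = Φ_ξ(κ)·e^{−ζ(ξ)κ}`. -/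
def Psi (L : EllLattice) (ξ κ : ℂ) : ℂ := L.Phi ξ κ * Complex.exp (-(L.zeta ξ) * κ)

/-- `η_δ(ξ) = ζ(ξ+δ) − ζ(ξ) − ζ(δ)`. -/
def eta (L : EllLattice) (δ ξ : ℂ) : ℂ := L.zeta (ξ + δ) - L.zeta ξ - L.zeta δ

/-- `χ_{α,β}(ξ) = ζ(α) + ζ(β) + ζ(ξ) − ζ(ξ+α+β)`. -/
def chi (L : EllLattice) (α β ξ : ℂ) : ℂ :=
  L.zeta α + L.zeta β + L.zeta ξ - L.zeta (ξ + α + β)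

end EllLattice

open Matrix

/-- All the data entering the elliptic (N,N′)-soliton solutions of the lattice KP system:
a period lattice, lattice parameters `δ, ε, λ`, a base point `ξ₀`, rapidity parameters
`κ_i, κ′_j`, initial plane-wave constants `ρ⁰_i, ν⁰_j` and a constant `N′×N` matrix `C`. -/
structure KPData (N N' : ℕ) where
  L : EllLattice
  del : ℂ
  eps : ℂ
  lam : ℂ
  xi0 : ℂ
  κ : Fin N → ℂ
  κ' : Fin N' → ℂ
  ρ0 : Fin N → ℂ
  ν0 : Fin N' → ℂ
  C : Matrix (Fin N') (Fin N) ℂ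

namespace KPData

variable {N N' : ℕ}

/-- `ξ = ξ₀ + nδ + mε + hλ`. -/
def xi (D : KPData N N') (n m h : ℤ) : ℂ :=
  D.xi0 + n • D.del + m • D.eps + h • D.lam

/-- The plane-wave factor `ρ_i(n,m,h)`. -/
def ρ (D : KPData N N') (i : Fin N) (n m h : ℤ) : ℂ :=
  (Complex.exp (-(D.L.zeta D.del) * D.κ i) * D.L.Psi D.del (-(D.κ i))) ^ n *
  (Complex.exp (-(D.L.zeta D.eps) * D.κ i) * D.L.Psi D.eps (-(D.κ i))) ^ m *
  (Complex.exp (-(D.L.zeta D.lam) * D.κ i) * D.L.Psi D.lam (-(D.κ i))) ^ h *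
  Complex.exp (D.L.zeta (D.xi n m h) * D.κ i) * D.ρ0 i

/-- The plane-wave factor `ν_j(n,m,h)`. -/
def ν (D : KPData N N') (j : Fin N') (n m h : ℤ) : ℂ :=
  (Complex.exp (D.L.zeta D.del * D.κ' j) * D.L.Psi D.del (D.κ' j)) ^ (-n) *
  (Complex.exp (D.L.zeta D.eps * D.κ' j) * D.L.Psi D.eps (D.κ' j)) ^ (-m) *
  (Complex.exp (D.L.zeta D.lam * D.κ' j) * D.L.Psi D.lam (D.κ' j)) ^ (-h) *
  Complex.exp (D.L.zeta (D.xi n m h) * D.κ' j) * D.ν0 j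

/-- The dressed elliptic Cauchy matrix `M_{ij} = ρ_i Ψ_ξ(κ_i + κ′_j) ν_j`. -/
def M (D : KPData N N') (n m h : ℤ) : Matrix (Fin N) (Fin N') ℂ :=
  Matrix.of fun i j => D.ρ i n m h * D.L.Psi (D.xi n m h) (D.κ i + D.κ' j) * D.ν j n m h

/-- The column vector `r = (ρ_i Ψ_ξ(κ_i))_i`. -/
def r (D : KPData N N') (n m h : ℤ) : Fin N → ℂ :=
  fun i => D.ρ i n m h * D.L.Psi (D.xi n m h) (D.κ i)

/-- The column vector `s = (ν_j Ψ_ξ(κ′_j))_j`. -/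
def s (D : KPData N N') (n m h : ℤ) : Fin N' → ℂ :=
  fun j => D.ν j n m h * D.L.Psi (D.xi n m h) (D.κ' j)

/-- The τ-function `τ = det(1 + MC)`. -/
def τ (D : KPData N N') (n m h : ℤ) : ℂ := (1 + D.M n m h * D.C).det

/-- The diagonal matrix `χ_{α,K}(ξ) = diag(χ_{α,κ_i}(ξ))`. -/
def DK (D : KPData N N') (α : ℂ) (n m h : ℤ) : Matrix (Fin N) (Fin N) ℂ :=
  Matrix.diagonal fun i => D.L.chi α (D.κ i) (D.xi n m h)

/-- The diagonal matrix `χ_{β,K′}(ξ) = diag(χ_{β,κ′_j}(ξ))`. -/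
def DK' (D : KPData N N') (β : ℂ) (n m h : ℤ) : Matrix (Fin N') (Fin N') ℂ :=
  Matrix.diagonal fun j => D.L.chi β (D.κ' j) (D.xi n m h)

/-- `W_β = 1 − sᵀ (χ_{β,K′}(ξ))⁻¹ C (1+MC)⁻¹ r`. -/
def W (D : KPData N N') (β : ℂ) (n m h : ℤ) : ℂ :=
  1 - D.s n m h ⬝ᵥ ((D.DK' β n m h)⁻¹ *ᵥ (D.C *ᵥ ((1 + D.M n m h * D.C)⁻¹ *ᵥ D.r n m h)))

/-- `V_α = 1 − sᵀ (1+CM)⁻¹ C (χ_{α,K}(ξ))⁻¹ r`. -/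
def V (D : KPData N N') (α : ℂ) (n m h : ℤ) : ℂ :=
  1 - D.s n m h ⬝ᵥ ((1 + D.C * D.M n m h)⁻¹ *ᵥ (D.C *ᵥ ((D.DK α n m h)⁻¹ *ᵥ D.r n m h)))

/-- `w₀ = sᵀ C (1+MC)⁻¹ r`. -/
def w0 (D : KPData N N') (n m h : ℤ) : ℂ :=
  D.s n m h ⬝ᵥ (D.C *ᵥ ((1 + D.M n m h * D.C)⁻¹ *ᵥ D.r n m h))

/-- `w = ζ(ξ) − w₀ − nζ(δ) − mζ(ε) − hζ(λ)`. -/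
def w (D : KPData N N') (n m h : ℤ) : ℂ :=
  D.L.zeta (D.xi n m h) - D.w0 n m h - n • D.L.zeta D.del - m • D.L.zeta D.eps -
    h • D.L.zeta D.lam

/-- `S_{β,α} = sᵀ (χ_{β,K′}(ξ))⁻¹ C (1+MC)⁻¹ (χ_{α,K}(ξ))⁻¹ r`. -/
def S (D : KPData N N') (β α : ℂ) (n m h : ℤ) : ℂ :=
  D.s n m h ⬝ᵥ ((D.DK' β n m h)⁻¹ *ᵥ
    (D.C *ᵥ ((1 + D.M n m h * D.C)⁻¹ *ᵥ ((D.DK α n m h)⁻¹ *ᵥ D.r n m h))))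

/-- `u_α = (1+MC)⁻¹ (χ_{α,K}(ξ))⁻¹ r`. -/
def u (D : KPData N N') (α : ℂ) (n m h : ℤ) : Fin N → ℂ :=
  (1 + D.M n m h * D.C)⁻¹ *ᵥ ((D.DK α n m h)⁻¹ *ᵥ D.r n m h)

/-- `u₀ = (1+MC)⁻¹ r`. -/
def u0 (D : KPData N N') (n m h : ℤ) : Fin N → ℂ :=
  (1 + D.M n m h * D.C)⁻¹ *ᵥ D.r n m h

/-- the adjoint (row) vector `ᵗu_β = sᵀ (χ_{β,K′}(ξ))⁻¹ (1+CM)⁻¹`. -/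
def tu (D : KPData N N') (β : ℂ) (n m h : ℤ) : Fin N' → ℂ :=
  (D.s n m h ᵥ* (D.DK' β n m h)⁻¹) ᵥ* (1 + D.C * D.M n m h)⁻¹

/-- the adjoint (row) vector `ᵗu₀ = sᵀ (1+CM)⁻¹`. -/
def tu0 (D : KPData N N') (n m h : ℤ) : Fin N' → ℂ :=
  D.s n m h ᵥ* (1 + D.C * D.M n m h)⁻¹

/-- The gauge variable `𝒱_α = Φ_ξ(α)·V_α`. -/
def calV (D : KPData N N') (α : ℂ) (n m h : ℤ) : ℂ :=
  D.L.Phi (D.xi n m h) α * D.V α n m h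

/-- The gauge variable `𝒲_β = Φ_ξ(β)·W_β`. -/
def calW (D : KPData N N') (β : ℂ) (n m h : ℤ) : ℂ :=
  D.L.Phi (D.xi n m h) β * D.W β n m h

/-- The Schwarzian variable `Z_{β,α} = Φ_ξ(α+β)·(1 − χ_{α,β}(ξ)·S_{β,α})`. -/
def Z (D : KPData N N') (β α : ℂ) (n m h : ℤ) : ℂ :=
  D.L.Phi (D.xi n m h) (α + β) * (1 - D.L.chi α β (D.xi n m h) * D.S β α n m h)

/-- Genericity of the parameters (together with finitely many auxiliary points `extra`):
no nontrivial integer combination of `ξ₀, δ, ε, λ`, the rapidity parameters and the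
auxiliary points lies on the lattice.  In particular all arguments of `σ` occurring in
the soliton solutions and their shifts lie outside `Λ`. -/
def Generic {P : ℕ} (D : KPData N N') (extra : Fin P → ℂ) : Prop :=
  ∀ (c0 cn cm ch : ℤ) (a : Fin N → ℤ) (b : Fin N' → ℤ) (e : Fin P → ℤ),
    ¬ (c0 = 0 ∧ cn = 0 ∧ cm = 0 ∧ ch = 0 ∧ a = 0 ∧ b = 0 ∧ e = 0) →
    ¬ D.L.mem (c0 • D.xi0 + cn • D.del + cm • D.eps + ch • D.lam +
      (∑ i, a i • D.κ i) + (∑ j, b j • D.κ' j) + ∑ t, e t • extra t)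

end KPData


open Filter Topology

namespace SigAux

/-- elementary factor bound -/
lemma factor_bound (u : ℂ) (hu : ‖u‖ ≤ 1 / 2) :
    ‖(1 - u) * Complex.exp (u + u ^ 2 / 2) - 1‖ ≤ 10 * ‖u‖ ^ 3 := by
  have h0 := norm_nonneg u
  have hw : ‖u + u ^ 2 / 2‖ ≤ 2 * ‖u‖ := by
    refine (norm_add_le _ _).trans ?_
    rw [norm_div, norm_pow]
    simp
    nlinarith
  have hw1 : ‖u + u ^ 2 / 2‖ ≤ 1 := by linarith
  have hb := Complex.exp_bound hw1 (n := 3) (by norm_num)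
  set w := u + u ^ 2 / 2 with hwdef
  set R := Complex.exp w - ∑ m ∈ Finset.range 3, w ^ m / m.factorial with hR
  have hR2 : ‖R‖ ≤ 16 / 9 * ‖u‖ ^ 3 := by
    refine hb.trans ?_
    have : ‖w‖ ^ 3 ≤ (2 * ‖u‖) ^ 3 := by gcongr
    norm_num [Nat.factorial] at *
    nlinarith
  have hexp : (1 - u) * Complex.exp w - 1 = u ^ 3 * (-1/2 + (-3 / 8) * u - u ^ 2 / 8) + (1 - u) * R := by
    rw [hR]
    simp [Finset.sum_range_succ, Nat.factorial]
    rw [hwdef]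
    ring
  rw [hexp]
  have h1 : ‖(-1/2 + (-3 / 8) * u - u ^ 2 / 8 : ℂ)‖ ≤ 2 := by
    refine (norm_sub_le _ _).trans ?_
    have := norm_add_le (-1/2 : ℂ) ((-3 / 8) * u)
    rw [norm_div, norm_pow]
    have e1 : ‖(-1/2 : ℂ)‖ = 1 / 2 := by norm_num
    have e2 : ‖(-3 / 8 : ℂ) * u‖ = 3 / 8 * ‖u‖ := by rw [norm_mul]; norm_num
    have e3 : ‖(8 : ℂ)‖ = 8 := by norm_num
    rw [e1, e2] at this
    rw [e3]
    nlinarith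
  have h2 : ‖1 - u‖ ≤ 2 := by
    refine (norm_sub_le _ _).trans ?_
    simp; linarith
  calc _ ≤ ‖u‖ ^ 3 * 2 + 2 * (16 / 9 * ‖u‖ ^ 3) := by
        refine (norm_add_le _ _).trans ?_
        rw [norm_mul, norm_mul, norm_pow]
        gcongr
    _ ≤ _ := by nlinarith [pow_nonneg h0 3]

variable (P : PeriodPair)

/-- the factor of sigma at `l` -/
def fac (l : P.lattice) (z : ℂ) : ℂ :=
  if l = 0 then z else (1 - z / l) * Complex.exp (z / l + z ^ 2 / (2 * (l : ℂ) ^ 2))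

/-- sigma -/
def sg (z : ℂ) : ℂ := ∏' l : P.lattice, fac P l z

lemma fac_differentiable (l : P.lattice) : Differentiable ℂ (fac P l) := by
  unfold fac
  split_ifs <;> fun_prop

lemma fac_eq_zero_iff (l : P.lattice) (z : ℂ) : fac P l z = 0 ↔ z = l := by
  unfold fac
  split_ifs with h
  · simp [h]
  · have : (l : ℂ) ≠ 0 := by simpa using h
    simp only [mul_eq_zero, Complex.exp_ne_zero, or_false]
    rw [sub_eq_zero, eq_div_iff this, one_mul, eq_comm]

lemma summable_cube : Summable (fun l : P.lattice => ‖(l : ℂ)‖ ^ (-3 : ℝ)) :=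
  ZLattice.summable_norm_rpow P.lattice (-3) (by simp; norm_num)

lemma eventually_large (r : ℝ) : ∀ᶠ l : P.lattice in cofinite, r < ‖(l : ℂ)‖ := by
  have := (isCompact_iff_finite.mp (isCompact_closedBall (0 : P.lattice) r))
  refine this.subset ?_
  intro l hl
  simpa using hl

lemma fac_bound (r : ℝ) (hr : 0 < r) : ∀ᶠ l : P.lattice in cofinite, ∀ z ∈ Metric.ball (0 : ℂ) r,
    ‖fac P l z - 1‖ ≤ 10 * r ^ 3 * ‖(l : ℂ)‖ ^ (-3 : ℝ) := by
  filter_upwards [eventually_large P (2 * r)] with l hl z hz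
  have hl0 : 0 < ‖(l : ℂ)‖ := by linarith
  have hne : l ≠ 0 := by rintro rfl; simp at hl0
  have hz' : ‖z‖ < r := by simpa using hz
  have := factor_bound (z / l) (by rw [norm_div, div_le_iff₀ hl0]; linarith)
  have e : fac P l z = (1 - z / l) * Complex.exp (z / l + (z / l) ^ 2 / 2) := by
    rw [fac, if_neg hne]; congr 3; rw [div_pow, div_div, mul_comm]
  rw [e]
  refine this.trans ?_
  rw [norm_div, Real.rpow_neg hl0.le, div_pow]
  norm_cast
  rw [← div_eq_mul_inv, mul_div_assoc]
  gcongr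

lemma hasProd_fac (r : ℝ) (hr : 0 < r) :
    HasProdLocallyUniformlyOn (fac P) (sg P) (Metric.ball (0 : ℂ) r) := by
  have := Summable.hasProdLocallyUniformlyOn_one_add (f := fun l z => fac P l z - 1) Metric.isOpen_ball
    ((summable_cube P).mul_left (10 * r ^ 3)) (fac_bound P r hr)
    (fun i => ((fac_differentiable P i).continuous.sub continuous_const).continuousOn)
  simp only [add_sub_cancel] at this
  exact this

lemma mem_big (z : ℂ) : z ∈ Metric.ball (0 : ℂ) (‖z‖ + 1) := by simp

lemma sg_differentiable : Differentiable ℂ (sg P) := by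
  intro z
  have h := hasProd_fac P (‖z‖ + 1) (by positivity)
  have : DifferentiableOn ℂ (sg P) (Metric.ball (0 : ℂ) (‖z‖ + 1)) :=
    TendstoLocallyUniformlyOn.differentiableOn h
      (.of_forall fun s => by
        have := fun i => (fac_differentiable P i)
        fun_prop) Metric.isOpen_ball
  exact this.differentiableAt (Metric.isOpen_ball.mem_nhds (mem_big z))

lemma summable_fac (z : ℂ) : Summable (fun l => ‖fac P l z - 1‖) := by
  refine Summable.of_norm_bounded_eventually 
    ((summable_cube P).mul_left (10 * (‖z‖ + 1) ^ 3)) ?_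
  filter_upwards [fac_bound P (‖z‖ + 1) (by positivity)] with l hl
  simpa using hl z (mem_big z)

lemma multipliable_fac (z : ℂ) : Multipliable (fun l => fac P l z) := by
  simpa using multipliable_one_add_of_summable (summable_fac P z)

lemma sg_ne_zero {z : ℂ} (hz : z ∉ P.lattice) : sg P z ≠ 0 := by
  have := tprod_one_add_ne_zero_of_summable (f := fun l => fac P l z - 1)
    (fun l => by
      simp only [add_sub_cancel, ne_eq, fac_eq_zero_iff]
      rintro rfl; exact hz l.2) (summable_fac P z)
  simpa [sg] using this

lemma sg_eq_zero {z : ℂ} (hz : z ∈ P.lattice) : sg P z = 0 :=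
  tprod_of_exists_eq_zero ⟨⟨z, hz⟩, by rw [fac_eq_zero_iff]⟩

lemma sg_eq_zero_iff {z : ℂ} : sg P z = 0 ↔ z ∈ P.lattice :=
  ⟨fun h => by by_contra h'; exact sg_ne_zero P h' h, sg_eq_zero P⟩

/-- zeta summand -/
def zt (l : P.lattice) (z : ℂ) : ℂ := 1 / (z - l) + 1 / l + z / (l : ℂ) ^ 2

lemma hasSum_zt : HasSumLocallyUniformly (zt P) (∑' l, zt P l ·) := by
  refine P.hasSumLocallyUniformly_aux (u := fun r l => 2 * r ^ 2 * ‖(l : ℂ)‖ ^ (-3 : ℝ)) _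
    (fun r _ => (summable_cube P).mul_left _) fun r hr =>
    Filter.eventually_atTop.mpr ⟨2 * r, ?_⟩
  rintro _ h z hz l rfl
  have hl0 : 0 < ‖(l : ℂ)‖ := by linarith
  have hl : (l : ℂ) ≠ 0 := by simpa using hl0
  have hzl : z - l ≠ 0 := by
    intro h0; rw [sub_eq_zero.mp h0] at hz; linarith
  have e : zt P l z = z ^ 2 / ((z - l) * (l : ℂ) ^ 2) := by
    unfold zt; field_simp; ring
  have hd : ‖(l : ℂ)‖ / 2 ≤ ‖z - l‖ := by
    rw [norm_sub_rev]
    exact .trans (by linarith) (norm_sub_norm_le (l : ℂ) z)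
  rw [e, norm_div, norm_mul, norm_pow, norm_pow]
  calc _ ≤ r ^ 2 / (‖(l : ℂ)‖ / 2 * ‖(l : ℂ)‖ ^ 2) := by gcongr
    _ = 2 * r ^ 2 / ‖(l : ℂ)‖ ^ 3 := by field_simp
    _ = _ := by rw [Real.rpow_neg hl0.le, div_eq_mul_inv]; norm_cast

lemma sub_ne {z : ℂ} (hz : z ∉ P.lattice) (l : P.lattice) : z - l ≠ 0 := by
  intro h; rw [sub_eq_zero] at h; exact hz (h ▸ l.2)

lemma logDeriv_fac {z : ℂ} (hz : z ∉ P.lattice) (l : P.lattice) :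
    logDeriv (fac P l) z = zt P l z := by
  have hzl := sub_ne P hz l
  by_cases h : l = 0
  · subst h
    have : fac P 0 = id := by funext z; simp [fac]
    rw [this]
    simp [zt, logDeriv_apply]
  · have hl : (l : ℂ) ≠ 0 := by simpa using h
    have : HasDerivAt (fac P l) ((-(1 / (l : ℂ))) * Complex.exp (z / l + z ^ 2 / (2 * (l : ℂ) ^ 2))
        + (1 - z / l) * (Complex.exp (z / l + z ^ 2 / (2 * (l : ℂ) ^ 2)) *
          (1 / l + (2 * z) / (2 * (l : ℂ) ^ 2)))) z := by
      have e : fac P l = fun z => (1 - z / l) * Complex.exp (z / l + z ^ 2 / (2 * (l : ℂ) ^ 2)) := by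
        funext z; simp [fac, h]
      rw [e]
      have h1 : HasDerivAt (fun z : ℂ => z / l) (1 / (l : ℂ)) z := (hasDerivAt_id z).div_const _
      have h2 : HasDerivAt (fun z : ℂ => z ^ 2 / (2 * (l : ℂ) ^ 2)) ((2 * z) / (2 * (l : ℂ) ^ 2)) z := by
        simpa using (hasDerivAt_pow 2 z).div_const (2 * (l : ℂ) ^ 2)
      exact (h1.const_sub 1).mul (h1.add h2).cexp
    rw [logDeriv_apply, this.deriv, fac, if_neg h, zt]
    have hE := Complex.exp_ne_zero (z / l + z ^ 2 / (2 * (l : ℂ) ^ 2))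
    generalize Complex.exp (z / l + z ^ 2 / (2 * (l : ℂ) ^ 2)) = E at *
    have h3 : (1 - z / l) ≠ 0 := by
      intro h0
      apply hzl
      field_simp at h0
      linear_combination -h0
    have h4 : (l : ℂ) - z ≠ 0 := by intro h0; apply hzl; linear_combination -h0
    have h5 : z - l = -(l - z) := by ring
    rw [h5]
    field_simp
    ring

lemma logDeriv_sg {z : ℂ} (hz : z ∉ P.lattice) : logDeriv (sg P) z = ∑' l, zt P l z := by
  have h := logDeriv_tprod_eq_tsum (f := fac P) Metric.isOpen_ball (mem_big z)
    (fun l => by rw [ne_eq, fac_eq_zero_iff]; rintro rfl; exact hz l.2)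
    (fun l => (fac_differentiable P l).differentiableOn)
    (by
      simp only [logDeriv_fac P hz]
      exact (hasSum_zt P).hasSum.summable)
    ⟨_, hasProd_fac P (‖z‖ + 1) (by positivity)⟩
    (sg_ne_zero P hz)
  simp only [logDeriv_fac P hz] at h
  exact h

lemma isOpen_compl : IsOpen ((P.lattice : Set ℂ)ᶜ) := P.isClosed_lattice.isOpen_compl

lemma zt_differentiableOn (l : P.lattice) : DifferentiableOn ℂ (zt P l) (P.lattice : Set ℂ)ᶜ := by
  unfold zt
  refine .add (.add (.div (by fun_prop) (by fun_prop) fun z hz => sub_ne P hz l) (by fun_prop)) (by fun_prop)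

lemma zsum_differentiableOn : DifferentiableOn ℂ (∑' l, zt P l ·) (P.lattice : Set ℂ)ᶜ := by
  refine TendstoLocallyUniformlyOn.differentiableOn (hasSum_zt P).tendstoLocallyUniformlyOn
    (.of_forall fun s => ?_) (isOpen_compl P)
  exact .fun_sum fun i _ => zt_differentiableOn P i

lemma deriv_zsum {z : ℂ} (hz : z ∉ P.lattice) :
    deriv (∑' l, zt P l ·) z = - P.weierstrassP z := by
  have h1 : Set.EqOn (fun z => - deriv (∑' l, zt P l ·) z) P.weierstrassP (P.lattice : Set ℂ)ᶜ := by
    have hT := (hasSum_zt P).tendstoLocallyUniformlyOn (s := (P.lattice : Set ℂ)ᶜ)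
    have hd := hT.deriv (.of_forall fun s => .fun_sum fun i _ => zt_differentiableOn P i)
      (isOpen_compl P)
    intro z hz
    have hp := hd.tendsto_at hz
    have hs := P.hasSum_weierstrassP z
    have hs' : HasSum _ _ := hs.neg
    refine neg_eq_iff_eq_neg.mpr ?_
    refine tendsto_nhds_unique hp (hs'.congr fun s => ?_)
    simp only [Function.comp_apply]
    rw [deriv_fun_sum fun i _ => ((zt_differentiableOn P i).differentiableAt
      ((isOpen_compl P).mem_nhds hz))]
    refine Finset.sum_congr rfl fun l _ => ?_
    have hzl := sub_ne P hz l
    have h1 : HasDerivAt (fun z : ℂ => z - (l : ℂ)) 1 z := (hasDerivAt_id z).sub_const (l : ℂ)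
    have := (((h1.fun_inv hzl).add_const (1 / (l : ℂ))).add
      ((hasDerivAt_id z).div_const ((l : ℂ) ^ 2)))
    have e : zt P l = fun z : ℂ => (z - (l : ℂ))⁻¹ + 1 / (l : ℂ) + z / (l : ℂ) ^ 2 := by
      funext z; simp [zt]
    rw [e]
    refine Eq.trans ?_ this.deriv.symm
    simp; ring
  have := h1 hz
  simp only at this
  rw [← this]; ring

lemma conn_compl : IsPreconnected ((P.lattice : Set ℂ)ᶜ) := by
  have hc : (P.lattice : Set ℂ).Countable := by
    have : Countable P.lattice := P.latticeEquivProd.toEquiv.countable_iff.mpr inferInstance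
    exact Set.countable_coe_iff.mp this
  exact (hc.isPathConnected_compl_of_one_lt_rank (by simp)).isConnected.isPreconnected

lemma add_notMem {z w : ℂ} (hz : z ∉ P.lattice) (hw : w ∈ P.lattice) : z + w ∉ P.lattice := by
  intro h; exact hz (by simpa using sub_mem h hw)

lemma sg_quasi (w : P.lattice) : ∃ a c : ℂ, a ≠ 0 ∧ ∀ z, sg P (z + w) = a * Complex.exp (c * z) * sg P z := by
  set U := (P.lattice : Set ℂ)ᶜ with hU
  have hUo : IsOpen U := isOpen_compl P
  set Z : ℂ → ℂ := fun z => ∑' l, zt P l z with hZ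
  have hZd : ∀ z ∈ U, HasDerivAt Z (- P.weierstrassP z) z := fun z hz => by
    rw [← deriv_zsum P hz]
    exact ((zsum_differentiableOn P).differentiableAt (hUo.mem_nhds hz)).hasDerivAt
  have hshift : ∀ z ∈ U, z + w ∈ U := fun z hz => add_notMem P hz w.2
  have hD : ∀ z ∈ U, HasDerivAt (fun z => Z (z + w) - Z z) 0 z := fun z hz => by
    have h1 := (hZd _ (hshift z hz)).comp_add_const z (w : ℂ)
    have := h1.sub (hZd z hz)
    rw [P.weierstrassP_add_coe, sub_self] at this
    exact this
  obtain ⟨c, hc⟩ := hUo.exists_is_const_of_deriv_eq_zero (conn_compl P)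
    (fun z hz => (hD z hz).differentiableAt.differentiableWithinAt) (fun z hz => (hD z hz).deriv)
  have hsd := sg_differentiable P
  have hlog : Set.EqOn (logDeriv (fun z => sg P (z + w))) (logDeriv (fun z => Complex.exp (c * z) * sg P z)) U := by
    intro z hz
    have hd1 : HasDerivAt (fun z => Complex.exp (c * z)) (Complex.exp (c * z) * c) z := by
      simpa using ((hasDerivAt_id z).const_mul c).cexp
    rw [logDeriv_mul (f := fun z => Complex.exp (c * z)) z (Complex.exp_ne_zero _) (sg_ne_zero P hz) hd1.differentiableAt (hsd z)]
    have e1 : logDeriv (fun z => sg P (z + w)) z = logDeriv (sg P) (z + w) := by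
      rw [logDeriv_apply, logDeriv_apply, deriv_comp_add_const]
    have e2 : logDeriv (fun z => Complex.exp (c * z)) z = c := by
      rw [logDeriv_apply, hd1.deriv]
      field_simp [Complex.exp_ne_zero]
    rw [e1, e2, logDeriv_sg P hz, logDeriv_sg P (hshift z hz)]
    have := hc z hz
    simp only [hZ] at this
    linear_combination this
  have := (logDeriv_eqOn_iff (f := fun z => sg P (z + w)) (g := fun z => Complex.exp (c * z) * sg P z)
    (s := U) (by fun_prop) (by fun_prop) hUo (conn_compl P) 
    (fun z hz => mul_ne_zero (Complex.exp_ne_zero _) (sg_ne_zero P hz))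
    (fun z hz => sg_ne_zero P (hshift z hz))).mp hlog
  obtain ⟨a, ha, hae⟩ := this
  refine ⟨a, c, ha, fun z => ?_⟩
  by_cases hz : z ∈ P.lattice
  · rw [sg_eq_zero P hz, sg_eq_zero P (add_mem hz w.2), mul_zero]
  · have := hae hz
    simpa [mul_assoc] using this

lemma sg_eq_mul (z : ℂ) : sg P z = z * ∏' l : P.lattice, if l = 0 then 1 else fac P l z := by
  have hm : Multipliable (Function.update (fun l => fac P l z) 0 1) := by
    have : Summable (fun l => ‖Function.update (fun l => fac P l z) 0 1 l - 1‖) := by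
      refine Summable.of_nonneg_of_le (fun l => norm_nonneg _) (fun l => ?_) (summable_fac P z)
      by_cases hl : l = 0
      · subst hl; simp
      · simp [hl]
    simpa using multipliable_one_add_of_summable this
  rw [sg, hm.tprod_eq_mul_tprod_ite' 0]
  simp [fac]

lemma sg_neg (z : ℂ) : sg P (-z) = - sg P z := by
  rw [sg_eq_mul, sg_eq_mul P z, ← (Equiv.neg P.lattice).tprod_eq, neg_mul]
  congr 3
  funext l
  by_cases hl : l = 0 <;> simp [hl, fac]



/-- sigma divided by its argument -/
def gg (z : ℂ) : ℂ := ∏' l : P.lattice, if l = 0 then 1 else fac P l z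

lemma gg_differentiable : Differentiable ℂ (gg P) := by
  intro z
  have hfd : ∀ l : P.lattice, Differentiable ℂ (fun z => if l = 0 then 1 else fac P l z) := by
    intro l
    by_cases h : l = 0
    · simp [h]
    · simpa [h] using fac_differentiable P l
  have h0 := Summable.hasProdLocallyUniformlyOn_one_add
    (f := fun (l : P.lattice) z => (if l = 0 then 1 else fac P l z) - 1)
    (Metric.isOpen_ball (x := (0 : ℂ)) (ε := ‖z‖ + 1))
    ((summable_cube P).mul_left (10 * (‖z‖ + 1) ^ 3))
    (by
      filter_upwards [fac_bound P (‖z‖ + 1) (by positivity)] with l hl x hx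
      by_cases h : l = 0
      · simp only [h, if_true, sub_self, norm_zero]; positivity
      · simpa [h] using hl x hx)
    (fun i => ((hfd i).continuous.sub continuous_const).continuousOn)
  simp only [add_sub_cancel] at h0
  have : DifferentiableOn ℂ (gg P) (Metric.ball (0 : ℂ) (‖z‖ + 1)) :=
    TendstoLocallyUniformlyOn.differentiableOn h0
      (.of_forall fun s => .fun_finsetProd fun i _ => (hfd i).differentiableOn) Metric.isOpen_ball
  exact this.differentiableAt (Metric.isOpen_ball.mem_nhds (mem_big z))

lemma sg_eq_mul_gg (z : ℂ) : sg P z = z * gg P z := sg_eq_mul P z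

lemma gg_zero : gg P 0 = 1 := by
  unfold gg
  convert tprod_one with l
  by_cases h : l = 0 <;> simp [h, fac]

lemma deriv_sg_zero : deriv (sg P) 0 = 1 := by
  have : sg P = fun z => z * gg P z := funext (sg_eq_mul_gg P)
  rw [this]
  have := (hasDerivAt_id (0 : ℂ)).mul (gg_differentiable P 0).hasDerivAt
  refine Eq.trans this.deriv ?_
  simp [gg_zero]

lemma dslope_entire {E : ℂ → ℂ} (hE : Differentiable ℂ E) : Differentiable ℂ (dslope E 0) := by
  have := (Complex.differentiableOn_dslope (c := 0) (s := Set.univ) (f := E) univ_mem).mpr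
    hE.differentiableOn
  exact differentiableOn_univ.mp this

lemma eq_mul_dslope {E : ℂ → ℂ} (h0 : E 0 = 0) (z : ℂ) : E z = z * dslope E 0 z := by
  have := sub_smul_dslope E 0 z
  simpa [h0] using this.symm

lemma const_of_quasi (E : ℂ → ℂ) (hE : Differentiable ℂ E)
    (hq : ∀ (w : P.lattice) z, E (z + w) * sg P z ^ 2 = E z * sg P (z + w) ^ 2)
    (h0 : E 0 = 0) (h1 : deriv E 0 = 0) : ∃ k, ∀ z, z ∉ P.lattice → E z = k * sg P z ^ 2 := by
  classical
  set E1 := dslope E 0 with hE1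
  set E2 := dslope E1 0 with hE2
  have dE2 : Differentiable ℂ E2 := dslope_entire (dslope_entire hE)
  have hfac : ∀ z, E z = z ^ 2 * E2 z := fun z => by
    rw [eq_mul_dslope h0 z, eq_mul_dslope (E := dslope E 0) (by simpa using h1) z]
    ring
  set h : ℂ → ℂ := fun z => if z ∈ P.lattice then E2 0 else E z / sg P z ^ 2 with hh
  have hsd := sg_differentiable P
  have hgd := gg_differentiable P
  have hper : ∀ (w : P.lattice) z, h (z + w) = h z := by
    intro w z
    by_cases hz : z ∈ P.lattice
    · have : z + w ∈ P.lattice := add_mem hz w.2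
      simp [hh, hz, this]
    · have hz' := add_notMem P hz w.2
      simp only [hh, hz, hz', if_false]
      have a1 := sg_ne_zero P hz
      have a2 := sg_ne_zero P hz'
      rw [div_eq_div_iff (pow_ne_zero _ a2) (pow_ne_zero _ a1)]
      exact hq w z
  have hd0 : DifferentiableAt ℂ h 0 := by
    have hd : DifferentiableAt ℂ (fun z => E2 z / gg P z ^ 2) 0 :=
      (dE2 0).div ((hgd 0).pow 2) (by simp [gg_zero])
    refine hd.congr_of_eventuallyEq ?_
    filter_upwards [P.compl_lattice_sdiff_singleton_mem_nhds 0] with z hz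
    by_cases hz0 : z = 0
    · subst hz0; simp [hh, gg_zero]
    · have hzL : z ∉ P.lattice := fun hc => hz ⟨hc, hz0⟩
      simp only [hh, hzL, if_false]
      rw [hfac, sg_eq_mul_gg]
      have : gg P z ≠ 0 := by
        intro hg; apply sg_ne_zero P hzL; rw [sg_eq_mul_gg, hg, mul_zero]
      field_simp
  have hdiff : Differentiable ℂ h := by
    intro z
    by_cases hz : z ∈ P.lattice
    · have e : h = fun x => h (x - z) := by
        funext x
        have := hper ⟨z, hz⟩ (x - z)
        simpa using this
      rw [e]
      have : DifferentiableAt ℂ h (z - z) := by rwa [sub_self]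
      exact this.comp z (f := fun x => x - z) (by fun_prop)
    · have hd : DifferentiableAt ℂ (fun z => E z / sg P z ^ 2) z :=
        (hE z).div ((hsd z).pow 2) (pow_ne_zero _ (sg_ne_zero P hz))
      refine hd.congr_of_eventuallyEq ?_
      filter_upwards [(isOpen_compl P).mem_nhds hz] with x hx
      have : x ∉ P.lattice := hx
      simp [hh, this]
  have hb : Bornology.IsBounded (Set.range h) := by
    refine ((isCompact_closedBall (0 : ℂ) (∑ i, ‖P.basis i‖)).image hdiff.continuous).isBounded.subset ?_
    rintro _ ⟨z, rfl⟩
    refine ⟨ZSpan.fract P.basis z, ?_, ?_⟩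
    · simpa using ZSpan.norm_fract_le P.basis z
    · have hm : (ZSpan.floor P.basis z : ℂ) ∈ P.lattice := by
        rw [P.lattice_eq_span_range_basis]; exact (ZSpan.floor P.basis z).2
      have := hper ⟨_, hm⟩ (ZSpan.fract P.basis z)
      rw [← this]
      congr 1
      simp [ZSpan.fract_apply]
  refine ⟨h 0, fun z hz => ?_⟩
  have := hdiff.apply_eq_apply_of_bounded hb z 0
  rw [← this]
  simp only [hh, hz, if_false]
  have := sg_ne_zero P hz
  field_simp

/-- the numerator of the Weierstrass p-function -/
def QQ (z : ℂ) : ℂ := deriv (sg P) z ^ 2 - sg P z * deriv (deriv (sg P)) z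

lemma d1 : Differentiable ℂ (deriv (sg P)) := (sg_differentiable P).deriv
lemma d2 : Differentiable ℂ (deriv (deriv (sg P))) := (d1 P).deriv

lemma QQ_quasi (w : P.lattice) (z : ℂ) :
    QQ P (z + w) * sg P z ^ 2 = QQ P z * sg P (z + w) ^ 2 := by
  obtain ⟨a, c, ha, h⟩ := sg_quasi P w
  have he : ∀ z, HasDerivAt (fun z => Complex.exp (c * z)) (Complex.exp (c * z) * c) z := fun z => by
    simpa using ((hasDerivAt_id z).const_mul c).cexp
  have hs1 : ∀ z, deriv (sg P) (z + w) = a * Complex.exp (c * z) * (c * sg P z + deriv (sg P) z) := by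
    intro z
    rw [← deriv_comp_add_const, funext h]
    have := ((he z).const_mul a).mul ((sg_differentiable P) z).hasDerivAt
    refine this.deriv.trans ?_
    ring
  have hs2 : ∀ z, deriv (deriv (sg P)) (z + w) = a * Complex.exp (c * z) *
      (c ^ 2 * sg P z + 2 * c * deriv (sg P) z + deriv (deriv (sg P)) z) := by
    intro z
    rw [← deriv_comp_add_const, funext hs1]
    have := ((he z).const_mul a).mul
      ((((sg_differentiable P) z).hasDerivAt.const_mul c).add ((d1 P) z).hasDerivAt)
    refine this.deriv.trans ?_
    simp only [Pi.add_apply]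
    ring
  unfold QQ
  rw [hs1, hs2, h]
  ring

lemma deriv_sg_neg (z : ℂ) : deriv (sg P) (-z) = deriv (sg P) z := by
  have h : (fun z => sg P (-z)) = fun z => - sg P z := funext (sg_neg P)
  have := congrArg (fun f => deriv f z) h
  simp only [deriv_comp_neg, deriv.fun_neg] at this
  simpa using this

lemma deriv2_sg_neg (z : ℂ) : deriv (deriv (sg P)) (-z) = - deriv (deriv (sg P)) z := by
  have h : (fun z => deriv (sg P) (-z)) = fun z => deriv (sg P) z := funext (deriv_sg_neg P)
  have := congrArg (fun f => deriv f z) h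
  simp only [deriv_comp_neg] at this
  rw [← this, neg_neg]

lemma QQ_neg (z : ℂ) : QQ P (-z) = QQ P z := by
  unfold QQ; rw [deriv_sg_neg, deriv2_sg_neg, sg_neg]; ring

lemma sg_zero : sg P 0 = 0 := sg_eq_zero P (zero_mem _)

lemma QQ_zero : QQ P 0 = 1 := by
  unfold QQ; rw [deriv_sg_zero, sg_zero]; simp

/-- product -/
def FF (x a : ℂ) : ℂ := sg P (x + a) * sg P (x - a)

lemma FF_anti (x a : ℂ) : FF P x a = - FF P a x := by
  unfold FF
  rw [← neg_sub a x, sg_neg, add_comm]; ring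

lemma FF_aux {a x : ℂ} (ha : a ∉ P.lattice) (hx : x ∉ P.lattice) :
    FF P x a = QQ P a * sg P x ^ 2 - sg P a ^ 2 * QQ P x := by
  have hs := sg_differentiable P
  have hd1 := d1 P
  have hd2 := d2 P
  set E : ℂ → ℂ := fun x => FF P x a + sg P a ^ 2 * QQ P x with hE
  have hEd : Differentiable ℂ E := by
    simp only [hE, FF, QQ]
    fun_prop
  have hEn : ∀ x, E (-x) = E x := by
    intro x
    simp only [hE, QQ_neg, FF]
    have e1 : -x + a = -(x - a) := by ring
    have e2 : -x - a = -(x + a) := by ring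
    rw [e1, e2, sg_neg, sg_neg]; ring
  have hE0 : E 0 = 0 := by
    simp only [hE, FF, QQ_zero, zero_add, zero_sub, sg_neg]; ring
  have hE1 : deriv E 0 = 0 := by
    have := congrArg (fun f => deriv f 0) (funext hEn)
    simp only [deriv_comp_neg, neg_zero] at this
    linear_combination (-1 / 2) * this
  obtain ⟨k, hk⟩ := const_of_quasi P E hEd (fun w z => by
    have hQ := QQ_quasi P w z
    obtain ⟨b, c, hb, h⟩ := sg_quasi P w
    have hF : FF P (z + w) a * sg P z ^ 2 = FF P z a * sg P (z + w) ^ 2 := by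
      unfold FF
      have e1 : z + w + a = (z + a) + w := by ring
      have e2 : z + w - a = (z - a) + w := by ring
      rw [e1, e2, h, h, h]
      have e3 : Complex.exp (c * (z + a)) * Complex.exp (c * (z - a)) = Complex.exp (c * z) ^ 2 := by
        rw [← Complex.exp_add, ← Complex.exp_nat_mul]; congr 1; push_cast; ring
      linear_combination (b ^ 2 * sg P (z + a) * sg P (z - a) * sg P z ^ 2) * e3
    simp only [hE]
    linear_combination hF + sg P a ^ 2 * hQ) hE0 hE1
  have hka := hk a ha
  have hkx := hk x hx
  simp only [hE] at hka hkx
  have hFa : FF P a a = 0 := by simp [FF, sg_zero]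
  rw [hFa] at hka
  have hk' : k = QQ P a := by
    have := sg_ne_zero P ha
    have h2 : sg P a ^ 2 ≠ 0 := pow_ne_zero _ this
    apply mul_right_cancel₀ h2
    linear_combination -hka
  rw [hk'] at hkx
  linear_combination hkx

lemma QQ_lat {a : ℂ} (ha : a ∈ P.lattice) : QQ P a = deriv (sg P) a ^ 2 := by
  unfold QQ; rw [sg_eq_zero P ha]; ring

lemma dense_compl : Dense ((P.lattice : Set ℂ)ᶜ) := by
  have hc : (P.lattice : Set ℂ).Countable := by
    have : Countable P.lattice := P.latticeEquivProd.toEquiv.countable_iff.mpr inferInstance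
    exact Set.countable_coe_iff.mp this
  exact hc.dense_compl ℝ

lemma FF_eq (x a : ℂ) : FF P x a = QQ P a * sg P x ^ 2 - sg P a ^ 2 * QQ P x := by
  have cs := (sg_differentiable P).continuous
  have cd := (d1 P).continuous
  have cdd := (d2 P).continuous
  have s1 : ∀ a ∉ P.lattice, ∀ x, FF P x a = QQ P a * sg P x ^ 2 - sg P a ^ 2 * QQ P x := by
    intro a ha x
    refine congrFun (Continuous.ext_on (dense_compl P) (f := fun x => FF P x a)
      (g := fun x => QQ P a * sg P x ^ 2 - sg P a ^ 2 * QQ P x) ?_ ?_ fun x hx => FF_aux P ha hx) x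
    · unfold FF; fun_prop
    · unfold QQ; fun_prop
  refine congrFun (Continuous.ext_on (dense_compl P) (f := fun a => FF P x a)
      (g := fun a => QQ P a * sg P x ^ 2 - sg P a ^ 2 * QQ P x) ?_ ?_ fun a ha => s1 a ha x) a
  · unfold FF; fun_prop
  · unfold QQ; fun_prop

lemma three_term (x a b c : ℂ) :
    FF P x a * FF P b c + FF P x b * FF P c a + FF P x c * FF P a b = 0 := by
  simp only [FF_eq]; ring

lemma fay (x y k p : ℂ) :
    sg P (x + k + p) * sg P (y + p) * sg P k * sg P (x + y) =
      sg P (x + k) * sg P (x + y + p) * sg P (k + p) * sg P y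
       - sg P (x + y + k + p) * sg P (y - k) * sg P x * sg P p := by
  have h := three_term P ((x + y + k + 2 * p) / 2) ((x + k - y) / 2) ((x + y - k) / 2)
    ((x + y + k) / 2)
  unfold FF at h
  have e1 : (x + y + k + 2 * p) / 2 + (x + k - y) / 2 = x + k + p := by ring
  have e2 : (x + y + k + 2 * p) / 2 - (x + k - y) / 2 = y + p := by ring
  have e3 : (x + y - k) / 2 + (x + y + k) / 2 = x + y := by ring
  have e4 : (x + y - k) / 2 - (x + y + k) / 2 = - k := by ring
  have e5 : (x + y + k + 2 * p) / 2 + (x + y - k) / 2 = x + y + p := by ring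
  have e6 : (x + y + k + 2 * p) / 2 - (x + y - k) / 2 = k + p := by ring
  have e7 : (x + y + k) / 2 + (x + k - y) / 2 = x + k := by ring
  have e8 : (x + y + k) / 2 - (x + k - y) / 2 = y := by ring
  have e9 : (x + y + k + 2 * p) / 2 + (x + y + k) / 2 = x + y + k + p := by ring
  have e10 : (x + y + k + 2 * p) / 2 - (x + y + k) / 2 = p := by ring
  have e11 : (x + k - y) / 2 + (x + y - k) / 2 = x := by ring
  have e12 : (x + k - y) / 2 - (x + y - k) / 2 = - (y - k) := by ring
  rw [e1, e2, e3, e4, e5, e6, e7, e8, e9, e10, e11, e12, sg_neg, sg_neg] at h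
  linear_combination -h

end SigAux

namespace EllLattice

/-- the period pair -/
def pp (L : EllLattice) : PeriodPair where
  ω₁ := L.ω₁
  ω₂ := L.ω₂
  indep := LinearIndependent.pair_iff.mpr fun a b h => L.indep a b h

lemma sigma_eq (L : EllLattice) (z : ℂ) : L.sigma z = SigAux.sg L.pp z := by
  rw [SigAux.sg_eq_mul, sigma]
  congr 1
  rw [← L.pp.latticeEquivProd.symm.toEquiv.tprod_eq]
  rw [← tprod_subtype_eq_of_mulSupport_subset (s := {p : ℤ × ℤ | p ≠ 0})]
  · refine tprod_congr fun p => ?_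
    have hp : p.1 ≠ 0 := p.2
    have e : ((L.pp.latticeEquivProd.symm p.1 : L.pp.lattice) : ℂ) = L.per p.1 := by
      rw [PeriodPair.latticeEquiv_symm_apply]; simp [per, pp]
    simp only [LinearEquiv.coe_toEquiv, SigAux.fac, EmbeddingLike.map_eq_zero_iff, hp, if_false, e]
  · intro p hp
    simp only [Set.mem_ofPred_eq]
    rintro rfl
    simp at hp

lemma mem_iff (L : EllLattice) (z : ℂ) : L.mem z ↔ z ∈ L.pp.lattice := by
  rw [PeriodPair.mem_lattice, mem]
  constructor
  · rintro ⟨m, n, h⟩; exact ⟨m, n, by rw [h]; simp [pp]⟩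
  · rintro ⟨m, n, h⟩; exact ⟨m, n, by rw [← h]; simp [pp]⟩

lemma sigma_ne_zero (L : EllLattice) {z : ℂ} (h : ¬ L.mem z) : L.sigma z ≠ 0 := by
  rw [sigma_eq]; exact SigAux.sg_ne_zero _ (by rwa [← mem_iff])

lemma sigma_neg (L : EllLattice) (z : ℂ) : L.sigma (-z) = - L.sigma z := by
  rw [sigma_eq, sigma_eq, SigAux.sg_neg]

lemma fay_Phi (L : EllLattice) (x y k p : ℂ) (hx : ¬ L.mem x) (hy : ¬ L.mem y) (hk : ¬ L.mem k)
    (hp : ¬ L.mem p) (hkp : ¬ L.mem (k + p)) (hxy : ¬ L.mem (x + y)) :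
    L.Phi x (k + p) * L.Phi y p = L.Phi x k * L.Phi (x + y) p
      + L.Phi (x + y) (k + p) * L.Phi y (-k) := by
  have h := SigAux.fay L.pp x y k p
  simp only [← sigma_eq] at h
  have h1 := L.sigma_ne_zero hx
  have h2 := L.sigma_ne_zero hy
  have h3 := L.sigma_ne_zero hk
  have h4 := L.sigma_ne_zero hp
  have h5 := L.sigma_ne_zero hkp
  have h6 := L.sigma_ne_zero hxy
  unfold Phi
  rw [sigma_neg, ← add_assoc, ← add_assoc, ← sub_eq_add_neg]
  field_simp
  linear_combination h

lemma exp_Psi (L : EllLattice) (x k : ℂ) :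
    Complex.exp (L.zeta x * k) * L.Psi x k = L.Phi x k := by
  unfold Psi
  rw [mul_left_comm, ← Complex.exp_add]; simp

lemma exp_Psi_neg (L : EllLattice) (x k : ℂ) :
    Complex.exp (-(L.zeta x) * k) * L.Psi x (-k) = L.Phi x (-k) := by
  rw [← exp_Psi]; simp

end EllLattice

namespace KPData

variable {N N' : ℕ}

/-- plane wave without the exponential -/
def RR (D : KPData N N') (i : Fin N) (n m h : ℤ) : ℂ :=
  D.L.Phi D.del (-(D.κ i)) ^ n * D.L.Phi D.eps (-(D.κ i)) ^ m *
    D.L.Phi D.lam (-(D.κ i)) ^ h * D.ρ0 i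

/-- plane wave without the exponential -/
def NN (D : KPData N N') (j : Fin N') (n m h : ℤ) : ℂ :=
  D.L.Phi D.del (D.κ' j) ^ (-n) * D.L.Phi D.eps (D.κ' j) ^ (-m) *
    D.L.Phi D.lam (D.κ' j) ^ (-h) * D.ν0 j

lemma ρ_eq (D : KPData N N') (i : Fin N) (n m h : ℤ) :
    D.ρ i n m h = D.RR i n m h * Complex.exp (D.L.zeta (D.xi n m h) * D.κ i) := by
  unfold ρ RR
  rw [EllLattice.exp_Psi_neg, EllLattice.exp_Psi_neg, EllLattice.exp_Psi_neg]; ring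

lemma ν_eq (D : KPData N N') (j : Fin N') (n m h : ℤ) :
    D.ν j n m h = D.NN j n m h * Complex.exp (D.L.zeta (D.xi n m h) * D.κ' j) := by
  unfold ν NN
  rw [EllLattice.exp_Psi, EllLattice.exp_Psi, EllLattice.exp_Psi]; ring

lemma r_eq (D : KPData N N') (i : Fin N) (n m h : ℤ) :
    D.r n m h i = D.RR i n m h * D.L.Phi (D.xi n m h) (D.κ i) := by
  unfold r
  rw [ρ_eq, mul_assoc, EllLattice.exp_Psi]

lemma s_eq (D : KPData N N') (j : Fin N') (n m h : ℤ) :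
    D.s n m h j = D.NN j n m h * D.L.Phi (D.xi n m h) (D.κ' j) := by
  unfold s
  rw [ν_eq, mul_assoc, EllLattice.exp_Psi]

lemma M_eq (D : KPData N N') (i : Fin N) (j : Fin N') (n m h : ℤ) :
    D.M n m h i j = D.RR i n m h * D.NN j n m h * D.L.Phi (D.xi n m h) (D.κ i + D.κ' j) := by
  rw [← EllLattice.exp_Psi, mul_add, Complex.exp_add]
  simp only [M, Matrix.of_apply]
  rw [ρ_eq, ν_eq]; ring

lemma gen_nat (D : KPData N N') (hgen : D.Generic ![]) (c0 cn cm ch : ℤ) (a : Fin N → ℤ)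
    (b : Fin N' → ℤ) (hne : ¬ (c0 = 0 ∧ cn = 0 ∧ cm = 0 ∧ ch = 0 ∧ a = 0 ∧ b = 0)) :
    ¬ D.L.mem (c0 • D.xi0 + cn • D.del + cm • D.eps + ch • D.lam +
      (∑ i, a i • D.κ i) + (∑ j, b j • D.κ' j)) := by
  have := hgen c0 cn cm ch a b ![] (fun hc => hne ⟨hc.1, hc.2.1, hc.2.2.1, hc.2.2.2.1,
    hc.2.2.2.2.1, hc.2.2.2.2.2.1⟩)
  simpa using this

lemma gen_kk (D : KPData N N') (hgen : D.Generic ![]) (i : Fin N) (j : Fin N')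
    (cn cm ch u v : ℤ) (hne : ¬ (cn = 0 ∧ cm = 0 ∧ ch = 0 ∧ u = 0 ∧ v = 0)) :
    ¬ D.L.mem (cn • D.del + cm • D.eps + ch • D.lam + u • D.κ i + v • D.κ' j) := by
  classical
  have := D.gen_nat hgen 0 cn cm ch (Pi.single i u) (Pi.single j v) (by
    rintro ⟨-, h1, h2, h3, h4, h5⟩
    exact hne ⟨h1, h2, h3, by simpa using h4, by simpa using h5⟩)
  have e1 : ∑ x, (Pi.single i u : Fin N → ℤ) x • D.κ x = u • D.κ i := by
    rw [Finset.sum_eq_single i] <;> simp +contextual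
  have e2 : ∑ x, (Pi.single j v : Fin N' → ℤ) x • D.κ' x = v • D.κ' j := by
    rw [Finset.sum_eq_single j] <;> simp +contextual
  rw [e1, e2, zero_smul, zero_add] at this
  exact this

lemma gen_xi (D : KPData N N') (hgen : D.Generic ![]) (n m h : ℤ) : ¬ D.L.mem (D.xi n m h) := by
  have := D.gen_nat hgen 1 n m h 0 0 (by simp)
  simpa [xi] using this

/-- the core entrywise identity -/
lemma core (D : KPData N N') (hgen : D.Generic ![]) (i : Fin N) (j : Fin N') (x y R S : ℂ)
    (hx : ¬ D.L.mem x) (hxy : ¬ D.L.mem (x + y)) (hy : ¬ D.L.mem y)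
    (hq : D.L.Phi y (D.κ' j) ≠ 0) :
    (R * D.L.Phi y (-(D.κ i))) * (S * (D.L.Phi y (D.κ' j))⁻¹) * D.L.Phi (x + y) (D.κ i + D.κ' j) =
      R * S * D.L.Phi x (D.κ i + D.κ' j) - (R * D.L.Phi x (D.κ i)) *
        (S * (D.L.Phi y (D.κ' j))⁻¹ * D.L.Phi (x + y) (D.κ' j)) := by
  have h1 := D.gen_kk hgen i j 0 0 0 1 0 (by simp)
  have h2 := D.gen_kk hgen i j 0 0 0 0 1 (by simp)
  have h3 := D.gen_kk hgen i j 0 0 0 1 1 (by simp)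
  simp only [zero_smul, one_smul, zero_add, add_zero] at h1 h2 h3
  have hf := D.L.fay_Phi x y (D.κ i) (D.κ' j) hx hy h1 h2 h3 hxy
  field_simp
  linear_combination (-(R * S)) * hf

lemma Phi_ne (L : EllLattice) {x k : ℂ} (h1 : ¬ L.mem x) (h2 : ¬ L.mem k) (h3 : ¬ L.mem (x + k)) :
    L.Phi x k ≠ 0 :=
  div_ne_zero (L.sigma_ne_zero h3) (mul_ne_zero (L.sigma_ne_zero h1) (L.sigma_ne_zero h2))

/-- nonvanishing data for one lattice direction -/
lemma dir_ne (D : KPData N N') (hgen : D.Generic ![]) (i : Fin N) (j : Fin N')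
    (cn cm ch : ℤ) (hne : ¬ (cn = 0 ∧ cm = 0 ∧ ch = 0)) (y : ℂ)
    (hy : y = cn • D.del + cm • D.eps + ch • D.lam) :
    ¬ D.L.mem y ∧ D.L.Phi y (-(D.κ i)) ≠ 0 ∧ D.L.Phi y (D.κ' j) ≠ 0 := by
  have h0 := D.gen_kk hgen i j cn cm ch 0 0 (by tauto)
  have h1 := D.gen_kk hgen i j cn cm ch (-1) 0 (by simp)
  have h2 := D.gen_kk hgen i j cn cm ch 0 1 (by simp)
  have h3 := D.gen_kk hgen i j 0 0 0 (-1) 0 (by simp)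
  have h4 := D.gen_kk hgen i j 0 0 0 0 1 (by simp)
  rw [← hy] at h0 h1 h2
  simp only [zero_smul, one_smul, neg_smul, zero_add, add_zero] at h0 h1 h2 h3 h4
  exact ⟨h0, Phi_ne _ h0 h3 h1, Phi_ne _ h0 h4 h2⟩

end KPData

/-- The dressed elliptic Cauchy matrix obeys the linear shift relations
`M̃ = M − r s̃ᵀ`, `M̂ = M − r ŝᵀ`, `M̄ = M − r s̄ᵀ`. -/
theorem dressed_cauchy_matrix_shift {N N' : ℕ} (D : KPData N N')
    (hρ0 : ∀ i, D.ρ0 i ≠ 0) (hν0 : ∀ j, D.ν0 j ≠ 0)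
    (hgen : D.Generic ![]) :
    ∀ n m h : ℤ,
      D.M (n + 1) m h = D.M n m h - Matrix.vecMulVec (D.r n m h) (D.s (n + 1) m h) ∧
      D.M n (m + 1) h = D.M n m h - Matrix.vecMulVec (D.r n m h) (D.s n (m + 1) h) ∧
      D.M n m (h + 1) = D.M n m h - Matrix.vecMulVec (D.r n m h) (D.s n m (h + 1)) := by
  intro n m h
  refine ⟨?_, ?_, ?_⟩
  · ext i j
    obtain ⟨hy, hp, hq⟩ := D.dir_ne hgen i j 1 0 0 (by simp) D.del (by simp)
    have hxi : D.xi (n + 1) m h = D.xi n m h + D.del := by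
      simp only [KPData.xi, add_smul, one_smul]; ring
    have hR : D.RR i (n + 1) m h = D.RR i n m h * D.L.Phi D.del (-(D.κ i)) := by
      unfold KPData.RR; rw [zpow_add_one₀ hp]; ring
    have hN : D.NN j (n + 1) m h = D.NN j n m h * (D.L.Phi D.del (D.κ' j))⁻¹ := by
      unfold KPData.NN; rw [neg_add, zpow_add₀ hq, _root_.zpow_neg_one]; ring
    have hc := D.core hgen i j (D.xi n m h) D.del (D.RR i n m h) (D.NN j n m h)
      (D.gen_xi hgen n m h) (hxi ▸ D.gen_xi hgen (n + 1) m h) hy hq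
    rw [Matrix.sub_apply, Matrix.vecMulVec_apply, KPData.M_eq, KPData.M_eq, KPData.r_eq,
      KPData.s_eq, hxi, hR, hN]
    exact hc
  · ext i j
    obtain ⟨hy, hp, hq⟩ := D.dir_ne hgen i j 0 1 0 (by simp) D.eps (by simp)
    have hxi : D.xi n (m + 1) h = D.xi n m h + D.eps := by
      simp only [KPData.xi, add_smul, one_smul]; ring
    have hR : D.RR i n (m + 1) h = D.RR i n m h * D.L.Phi D.eps (-(D.κ i)) := by
      unfold KPData.RR; rw [zpow_add_one₀ hp]; ring
    have hN : D.NN j n (m + 1) h = D.NN j n m h * (D.L.Phi D.eps (D.κ' j))⁻¹ := by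
      unfold KPData.NN; rw [neg_add, zpow_add₀ hq, _root_.zpow_neg_one]; ring
    have hc := D.core hgen i j (D.xi n m h) D.eps (D.RR i n m h) (D.NN j n m h)
      (D.gen_xi hgen n m h) (hxi ▸ D.gen_xi hgen n (m + 1) h) hy hq
    rw [Matrix.sub_apply, Matrix.vecMulVec_apply, KPData.M_eq, KPData.M_eq, KPData.r_eq,
      KPData.s_eq, hxi, hR, hN]
    exact hc
  · ext i j
    obtain ⟨hy, hp, hq⟩ := D.dir_ne hgen i j 0 0 1 (by simp) D.lam (by simp)
    have hxi : D.xi n m (h + 1) = D.xi n m h + D.lam := by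
      simp only [KPData.xi, add_smul, one_smul]; ring
    have hR : D.RR i n m (h + 1) = D.RR i n m h * D.L.Phi D.lam (-(D.κ i)) := by
      unfold KPData.RR; rw [zpow_add_one₀ hp]; ring
    have hN : D.NN j n m (h + 1) = D.NN j n m h * (D.L.Phi D.lam (D.κ' j))⁻¹ := by
      unfold KPData.NN; rw [neg_add, zpow_add₀ hq, _root_.zpow_neg_one]; ring
    have hc := D.core hgen i j (D.xi n m h) D.lam (D.RR i n m h) (D.NN j n m h)
      (D.gen_xi hgen n m h) (hxi ▸ D.gen_xi hgen n m (h + 1)) hy hq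
    rw [Matrix.sub_apply, Matrix.vecMulVec_apply, KPData.M_eq, KPData.M_eq, KPData.r_eq,
      KPData.s_eq, hxi, hR, hN]
    exact hc
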